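/- arXiv:2312.15423 — 3 statements merged into one kernel-verified Lean document; each statement's English description precedes it below -/
import Mathlib

section
/- Let Γ be a group and consider rational Γ-moulds, i.e. families M assigning to each m ≥ 0 and (σ_1,…,σ_m) ∈ Γ^m a rational function M(x_1,…,x_m; σ_1,…,σ_m) ∈ ℚ(x_1,…,x_m), multiplied by the mould product ×. Define Sh_*(M) to be the dimould with components Sh_*(M)(x_1,…,x_p; x_{p+1},…,x_{p+q}; σ_1,…,σ_{p+q}) := Σ_α c_α·M(α), where ((σ_1,x_1)⋯(σ_p,x_p)) ш_* ((σ_{p+1},x_{p+1})⋯(σ_{p+q},x_{p+q})) = Σ_α c_α·α and M(α) denotes the component of M evaluated at the labeled word α. Dimoulds are multiplied by (A×B)(x_1,…,x_p; x_{p+1},…,x_{p+q}; σ_1,…,σ_{p+q}) = Σ_{i=0}^{p} Σ_{j=0}^{q} A(x_1,…,x_i; x_{p+1},…,x_{p+j}; σ_1,…,σ_i, σ_{p+1},…,σ_{p+j})·B(x_{i+1},…,x_p; x_{p+j+1},…,x_{p+q}; σ_{i+1},…,σ_p, σ_{p+j+1},…,σ_{p+q}). Then Sh_* is a ℚ-algebra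 homomorphism: Sh_*(A×B) = Sh_*(A)×Sh_*(B) for all rational Γ-moulds A, B. -/
/-!
For a function `φ` on words, `shPair φ ω η` is the pairing of the contracting shuffle `ω ш_* η`
with `φ`, so that `Sh_*(M)` is the pairing with evaluation of `M`. The theorem has a combinatorial
half and an evaluation half.

The combinatorial half, `shPair_conv`, says that deconcatenation is multiplicative for `ш_*`:
pairing `ω ш_* η` with a convolution `φ ⋆ ψ` along deconcatenation gives the sum, over all cuts of
`ω` and of `η`, of the pairing of `φ` with the shuffle of the initial parts times the pairing of
`ψ` with the shuffle of the final parts. It follows by induction from the recursion for `ш_*`, and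
holds for any coefficients in place of `(u - v)⁻¹`, since a contraction involves only the first
letters of both words.

The evaluation half says that on the words that occur, evaluation of `A × B` is the convolution of
the evaluations of `A` and `B` (`ratEvalWord_mul`). This needs the substitution to be a field
embedding, because `ratEval` has the junk value `0` otherwise. Here it is one: a contraction keeps
one of the two forms it merges, so the forms of every word in the shuffle are pairwise distinct
variables (`forms_subperm`, `injective_of_forms`). Finally, naturality of `ш_*` under renaming of
variables (`map_shPair`) identifies the pairings of initial and final parts with the components of
`Sh_*(A)` and `Sh_*(B)` at the variables that the dimould product prescribes (`ratEval_ShStar`).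
-/

open scoped Classical
noncomputable section

def linToPoly {ι : Type} (u : ι →₀ ℤ) : MvPolynomial ι ℚ :=
  u.sum fun i c => (c : ℚ) • MvPolynomial.X i

abbrev RatFunc' (ι : Type) := FractionRing (MvPolynomial ι ℚ)

def linK {ι : Type} (u : ι →₀ ℤ) : RatFunc' ι :=
  algebraMap (MvPolynomial ι ℚ) (RatFunc' ι) (linToPoly u)

/-- The ring homomorphism `ℚ[x_1,…,x_r] → ℚ(x_i : i ∈ ι)` substituting the
polynomials `L j` for the variables. -/
def substHom {r : ℕ} {ι : Type} (L : Fin r → MvPolynomial ι ℚ) :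
    MvPolynomial (Fin r) ℚ →+* RatFunc' ι :=
  (algebraMap (MvPolynomial ι ℚ) (RatFunc' ι)).comp
    (MvPolynomial.aeval L).toRingHom

/-- Evaluation (substitution) of a rational function in `ℚ(x_1,…,x_r)` at a
tuple of polynomials, via the canonical lift to fraction fields.  It is the
canonical field embedding whenever the substitution is injective on
polynomials (e.g. for linearly independent linear forms). -/
def ratEval {r : ℕ} {ι : Type} (L : Fin r → MvPolynomial ι ℚ)
    (f : RatFunc' (Fin r)) : RatFunc' ι :=
  if h : Function.Injective (substHom L) then IsFractionRing.lift h f else 0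

/-- A `Γ`-mould valued in rational functions. -/
structure RatMould (Γ : Type) where
  comp : (m : ℕ) → (Fin m → Γ) → RatFunc' (Fin m)

/-- The mould product on rational moulds. -/
def RatMould.mul {Γ : Type} (A B : RatMould Γ) : RatMould Γ :=
  ⟨fun m σ => ∑ i : Fin (m + 1),
    ratEval (fun j : Fin (i : ℕ) => MvPolynomial.X (Fin.castLE i.is_le j))
        (A.comp (i : ℕ) (fun j => σ (Fin.castLE i.is_le j))) *
    ratEval (fun j : Fin (m - (i : ℕ)) =>
        MvPolynomial.X (⟨(i : ℕ) + (j : ℕ), by have := j.isLt; have := i.is_le; omega⟩ : Fin m))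
        (B.comp (m - (i : ℕ)) (fun j =>
          σ ⟨(i : ℕ) + (j : ℕ), by have := j.isLt; have := i.is_le; omega⟩))⟩

/-- A `Γ`-dimould valued in rational functions. -/
structure RatDimould (Γ : Type) where
  comp : (p q : ℕ) → (Fin (p + q) → Γ) → RatFunc' (Fin (p + q))

/-- First block embedding `{1,…,i} ∪ {p+1,…,p+j} ⊆ {1,…,p+q}` for the dimould
product. -/
def embA (p q : ℕ) (i : Fin (p + 1)) (j : Fin (q + 1)) (k : Fin ((i : ℕ) + (j : ℕ))) :
    Fin (p + q) :=
  if h : (k : ℕ) < (i : ℕ) then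
    ⟨(k : ℕ), by have := k.isLt; have := i.is_le; have := j.is_le; omega⟩
  else
    ⟨p + ((k : ℕ) - (i : ℕ)), by have := k.isLt; have := i.is_le; have := j.is_le; omega⟩

/-- Second block embedding `{i+1,…,p} ∪ {p+j+1,…,p+q} ⊆ {1,…,p+q}` for the
dimould product. -/
def embB (p q : ℕ) (i : Fin (p + 1)) (j : Fin (q + 1))
    (k : Fin ((p - (i : ℕ)) + (q - (j : ℕ)))) : Fin (p + q) :=
  if h : (k : ℕ) < p - (i : ℕ) then
    ⟨(i : ℕ) + (k : ℕ), by have := k.isLt; have := i.is_le; have := j.is_le; omega⟩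
  else
    ⟨p + (j : ℕ) + ((k : ℕ) - (p - (i : ℕ))),
      by have := k.isLt; have := i.is_le; have := j.is_le; omega⟩

/-- The dimould product. -/
def RatDimould.mul {Γ : Type} (A B : RatDimould Γ) : RatDimould Γ :=
  ⟨fun p q σ => ∑ i : Fin (p + 1), ∑ j : Fin (q + 1),
    ratEval (fun k => MvPolynomial.X (embA p q i j k))
        (A.comp (i : ℕ) (j : ℕ) (fun k => σ (embA p q i j k))) *
    ratEval (fun k => MvPolynomial.X (embB p q i j k))
        (B.comp (p - (i : ℕ)) (q - (j : ℕ)) (fun k => σ (embB p q i j k)))⟩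

def cshW {ι Γ : Type} [Mul Γ] :
    List (Γ × (ι →₀ ℤ)) → List (Γ × (ι →₀ ℤ)) → (List (Γ × (ι →₀ ℤ)) →₀ RatFunc' ι)
  | [], η => Finsupp.single η 1
  | ω, [] => Finsupp.single ω 1
  | a :: ω, b :: η =>
      Finsupp.mapDomain (a :: ·) (cshW ω (b :: η)) +
      Finsupp.mapDomain (b :: ·) (cshW (a :: ω) η) +
      (linK (a.2 - b.2))⁻¹ •
        (Finsupp.mapDomain (((a.1 * b.1, a.2) : Γ × (ι →₀ ℤ)) :: ·) (cshW ω η) -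
         Finsupp.mapDomain (((a.1 * b.1, b.2) : Γ × (ι →₀ ℤ)) :: ·) (cshW ω η))
  termination_by ω η => ω.length + η.length

/-- Evaluation of a rational mould at a labeled word of linear forms. -/
def ratEvalWord {Γ ι : Type} (M : RatMould Γ) (α : List (Γ × (ι →₀ ℤ))) :
    RatFunc' ι :=
  ratEval (fun j : Fin α.length => linToPoly (α.get j).2)
    (M.comp α.length (fun j => (α.get j).1))

/-- The map `Sh_*` from rational moulds to rational dimoulds, given by the
contracting shuffle. -/
def ShStar {Γ : Type} [Group Γ] (M : RatMould Γ) : RatDimould Γ :=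
  ⟨fun p q σ =>
    (cshW
        (List.ofFn fun i : Fin p => (σ (Fin.castAdd q i), Finsupp.single (Fin.castAdd q i) (1 : ℤ)))
        (List.ofFn fun i : Fin q => (σ (Fin.natAdd p i), Finsupp.single (Fin.natAdd p i) (1 : ℤ)))).sum
      fun α c => c * ratEvalWord M α⟩

/-! ### Shuffles and deconcatenation -/

/-- The pairing `Σ_α c_α φ(α)` of `ω ш_* η = Σ_α c_α α` with a function `φ` on words. -/
def shPair {ι Γ : Type} [Mul Γ] (φ : List (Γ × (ι →₀ ℤ)) → RatFunc' ι)
    (ω η : List (Γ × (ι →₀ ℤ))) : RatFunc' ι :=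
  (cshW ω η).sum fun α c => c * φ α

section Pairing

variable {ι Γ : Type}

/-- Summation against `φ` as a linear functional on the span of words. -/
lemma sum_eq_linearCombination (φ : List (Γ × (ι →₀ ℤ)) → RatFunc' ι)
    (s : List (Γ × (ι →₀ ℤ)) →₀ RatFunc' ι) :
    (s.sum fun α c => c * φ α) = Finsupp.linearCombination (RatFunc' ι) φ s := by
  simp [Finsupp.linearCombination_apply]

/-- The convolution of two functions on words along deconcatenation; for the evaluations of
two moulds at a word of independent forms it is the evaluation of their mould product. -/
def conv (φ ψ : List (Γ × (ι →₀ ℤ)) → RatFunc' ι) (α : List (Γ × (ι →₀ ℤ))) : RatFunc' ι :=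
  ∑ k ∈ Finset.range (α.length + 1), φ (α.take k) * ψ (α.drop k)

lemma conv_cons (φ ψ : List (Γ × (ι →₀ ℤ)) → RatFunc' ι) (a) (α) :
    conv φ ψ (a :: α) = φ [] * ψ (a :: α) + conv (fun β => φ (a :: β)) ψ α := by
  rw [conv, List.length_cons, Finset.sum_range_succ']
  simp [conv, add_comm]

variable [Mul Γ]

lemma shPair_nil_left (φ : List (Γ × (ι →₀ ℤ)) → RatFunc' ι) (η) :
    shPair φ [] η = φ η := by
  simp [shPair, cshW]

lemma shPair_nil_right (φ : List (Γ × (ι →₀ ℤ)) → RatFunc' ι) (ω) :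
    shPair φ ω [] = φ ω := by
  cases ω <;> simp [shPair, cshW]

lemma shPair_cons_cons (φ : List (Γ × (ι →₀ ℤ)) → RatFunc' ι) (a b) (ω η) :
    shPair φ (a :: ω) (b :: η) =
      shPair (fun α => φ (a :: α)) ω (b :: η) + shPair (fun α => φ (b :: α)) (a :: ω) η +
      (linK (a.2 - b.2))⁻¹ *
        (shPair (fun α => φ ((a.1 * b.1, a.2) :: α)) ω η -
          shPair (fun α => φ ((a.1 * b.1, b.2) :: α)) ω η) := by
  simp only [shPair, sum_eq_linearCombination]
  rw [cshW]
  simp only [map_add, map_sub, map_smul, Finsupp.linearCombination_mapDomain, smul_eq_mul]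
  rfl

lemma shPair_add (φ ψ : List (Γ × (ι →₀ ℤ)) → RatFunc' ι) (ω η) :
    shPair (fun α => φ α + ψ α) ω η = shPair φ ω η + shPair ψ ω η := by
  simp [shPair, mul_add, Finsupp.sum_add]

lemma shPair_mul_left (k : RatFunc' ι) (φ : List (Γ × (ι →₀ ℤ)) → RatFunc' ι) (ω η) :
    shPair (fun α => k * φ α) ω η = k * shPair φ ω η := by
  simp only [shPair, Finsupp.sum, Finset.mul_sum]
  exact Finset.sum_congr rfl fun _ _ => by ring

/-- Deconcatenation is multiplicative for `ш_*`: pairing a shuffle with a convolution amounts to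
cutting both factors and shuffling initial and final parts separately. In the induction, the
recursion for `ш_*` always creates the first letter of a word, so removing that letter either
leaves the cut at the very beginning (the term `φ []`) or falls into the initial part. -/
theorem shPair_conv (φ ψ : List (Γ × (ι →₀ ℤ)) → RatFunc' ι) (ω η) :
    shPair (conv φ ψ) ω η =
      ∑ i ∈ Finset.range (ω.length + 1), ∑ j ∈ Finset.range (η.length + 1),
        shPair φ (ω.take i) (η.take j) * shPair ψ (ω.drop i) (η.drop j) := by
  match ω, η with
  | [], η => simp [shPair_nil_left, conv]
  | a :: ω, [] => simp [shPair_nil_right, conv]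
  | a :: ω, b :: η =>
    have h1 := fun φ' => shPair_conv φ' ψ ω (b :: η)
    have h2 := fun φ' => shPair_conv φ' ψ (a :: ω) η
    have h3 := fun φ' => shPair_conv φ' ψ ω η
    rw [shPair_cons_cons]
    simp only [conv_cons, shPair_add, shPair_mul_left, h1, h2, h3]
    simp only [List.length_cons, Finset.sum_range_succ' _ (List.length _ + 1),
      List.take_succ_cons, List.drop_succ_cons, List.take_zero, List.drop_zero,
      Finset.sum_add_distrib, shPair_nil_left, shPair_nil_right, shPair_cons_cons φ,
      shPair_cons_cons ψ a b ω η, add_mul, mul_assoc, sub_mul, ← Finset.mul_sum,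
      Finset.sum_sub_distrib]
    ring
  termination_by ω.length + η.length

/-- The linear forms in a word of `ω ш_* η` are among those of `ω` and `η`, with multiplicity:
a contraction keeps one of the two forms it merges. -/
lemma forms_subperm (ω η : List (Γ × (ι →₀ ℤ))) :
    ∀ α ∈ (cshW ω η).support,
      (α.map Prod.snd).Subperm (ω.map Prod.snd ++ η.map Prod.snd) := by
  match ω, η with
  | [], η =>
    intro α h
    rw [cshW] at h
    have := Finsupp.support_single_subset h
    simp_all [List.Subperm.refl]
  | a :: ω, [] =>
    intro α h
    rw [cshW] at h
    · have := Finsupp.support_single_subset h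
      simp_all [List.Subperm.refl]
    · simp
  | a :: ω, b :: η =>
    intro α h
    have h1 := forms_subperm ω (b :: η)
    have h2 := forms_subperm (a :: ω) η
    have h3 := forms_subperm ω η
    rw [cshW] at h
    have key : ∀ (l : Γ × (ι →₀ ℤ)) (s : List (Γ × (ι →₀ ℤ)) →₀ RatFunc' ι),
        α ∈ (Finsupp.mapDomain (l :: ·) s).support → ∃ β ∈ s.support, l :: β = α := by
      intro l s hs
      simpa using Finsupp.mapDomain_support hs
    rcases Finset.mem_union.1 (Finsupp.support_add h) with h | h
    · rcases Finset.mem_union.1 (Finsupp.support_add h) with h | h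
      · obtain ⟨β, hβ, rfl⟩ := key _ _ h
        simpa using (List.subperm_cons a.2).2 (h1 β hβ)
      · obtain ⟨β, hβ, rfl⟩ := key _ _ h
        have := (List.subperm_cons b.2).2 (h2 β hβ)
        exact this.trans List.perm_middle.symm.subperm
    · rcases Finset.mem_union.1 (Finsupp.support_sub (Finsupp.support_smul h)) with h | h
      · obtain ⟨β, hβ, rfl⟩ := key _ _ h
        have := (List.subperm_cons a.2).2 (h3 β hβ)
        refine this.trans ?_
        exact ((List.Sublist.append_left (List.sublist_cons_self _ _) _).cons_cons _).subperm
      · obtain ⟨β, hβ, rfl⟩ := key _ _ h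
        have := (List.subperm_cons b.2).2 (h3 β hβ)
        refine (this.trans List.perm_middle.symm.subperm).trans ?_
        simpa using (List.sublist_cons_self _ _).subperm
  termination_by ω.length + η.length

/-- `ш_*` is natural under a renaming `e` of the variables. -/
lemma map_shPair {κ : Type} (e : κ → ι) (f : RatFunc' κ →+* RatFunc' ι)
    (hf : ∀ u, f (linK u) = linK (Finsupp.mapDomain e u))
    (φ : List (Γ × (κ →₀ ℤ)) → RatFunc' κ) (φ' : List (Γ × (ι →₀ ℤ)) → RatFunc' ι)
    (h : ∀ α, f (φ α) = φ' (α.map (Prod.map id (Finsupp.mapDomain e)))) (ω η) :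
    f (shPair φ ω η) = shPair φ' (ω.map (Prod.map id (Finsupp.mapDomain e)))
      (η.map (Prod.map id (Finsupp.mapDomain e))) := by
  match ω, η with
  | [], η => simp [shPair_nil_left, h]
  | a :: ω, [] => simp [shPair_nil_right, h]
  | a :: ω, b :: η =>
    have hsub : Finsupp.mapDomain e (a.2 - b.2) =
        Finsupp.mapDomain e a.2 - Finsupp.mapDomain e b.2 :=
      map_sub (Finsupp.mapDomain.addMonoidHom e) _ _
    simp only [List.map_cons, shPair_cons_cons, map_add, map_mul, map_sub, map_inv₀, hf]
    rw [map_shPair e f hf _ (fun α => φ' (Prod.map id (Finsupp.mapDomain e) a :: α))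
        (fun α => h _) ω (b :: η),
      map_shPair e f hf _ (fun α => φ' (Prod.map id (Finsupp.mapDomain e) b :: α))
        (fun α => h _) (a :: ω) η,
      map_shPair e f hf _ (fun α => φ' ((a.1 * b.1, Finsupp.mapDomain e a.2) :: α))
        (fun α => h _) ω η,
      map_shPair e f hf _ (fun α => φ' ((a.1 * b.1, Finsupp.mapDomain e b.2) :: α))
        (fun α => h _) ω η, hsub]
    rfl
  termination_by ω.length + η.length

end Pairing

/-! ### Evaluation of rational functions -/

/-- The field embedding of rational function fields given by an injective substitution. -/
def ratHom {r : ℕ} {ι : Type} (L : Fin r → MvPolynomial ι ℚ)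
    (h : Function.Injective (substHom L)) : RatFunc' (Fin r) →+* RatFunc' ι :=
  IsFractionRing.lift h

lemma ratEval_eq {r : ℕ} {ι : Type} (L : Fin r → MvPolynomial ι ℚ)
    (h : Function.Injective (substHom L)) (f) : ratEval L f = ratHom L h f := by
  simp [ratEval, h, ratHom]

lemma ratHom_algebraMap {r : ℕ} {ι : Type} (L : Fin r → MvPolynomial ι ℚ)
    (h : Function.Injective (substHom L)) (P : MvPolynomial (Fin r) ℚ) :
    ratHom L h (algebraMap _ _ P) = algebraMap _ _ (MvPolynomial.aeval L P) := by
  simp [ratHom, substHom]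

lemma substHom_comp {r s : ℕ} {ι : Type} (L : Fin r → MvPolynomial ι ℚ)
    (h : Function.Injective (substHom L)) (L' : Fin s → MvPolynomial (Fin r) ℚ) :
    substHom (fun j => MvPolynomial.aeval L (L' j)) = (ratHom L h).comp (substHom L') := by
  apply MvPolynomial.ringHom_ext
  · intro c; simp [substHom, ratHom_algebraMap]
  · intro j; simp [substHom, ratHom_algebraMap]

/-- Substitutions compose. If the inner substitution is not injective, neither is the composite,
and both sides are the junk value `0`. -/
lemma ratEval_ratEval {r s : ℕ} {ι : Type} (L : Fin r → MvPolynomial ι ℚ)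
    (h : Function.Injective (substHom L)) (L' : Fin s → MvPolynomial (Fin r) ℚ) (f) :
    ratEval L (ratEval L' f) = ratEval (fun j => MvPolynomial.aeval L (L' j)) f := by
  have hc := substHom_comp L h L'
  by_cases h' : Function.Injective (substHom L')
  · have h'' : Function.Injective (substHom fun j => MvPolynomial.aeval L (L' j)) := by
      rw [hc]; exact (ratHom L h).injective.comp h'
    rw [ratEval_eq L h, ratEval_eq L' h', ratEval_eq _ h'']
    have : (ratHom L h).comp (ratHom L' h') = ratHom _ h'' := by
      apply IsLocalization.ringHom_ext (nonZeroDivisors (MvPolynomial (Fin s) ℚ))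
      refine RingHom.ext fun P => ?_
      have hP := congrArg (fun g => g P) hc
      simpa [substHom, ratHom_algebraMap] using hP.symm
    exact congrArg (fun g => g f) this
  · have h'' : ¬ Function.Injective (substHom fun j => MvPolynomial.aeval L (L' j)) := by
      rw [hc]; exact fun H => h' (Function.Injective.of_comp (f := ratHom L h) H)
    rw [ratEval_eq L h, ratEval, ratEval, dif_neg h', dif_neg h'', map_zero]

lemma substHom_X_injective {r : ℕ} {ι : Type} (e : Fin r → ι) (he : Function.Injective e) :
    Function.Injective (substHom fun j => (MvPolynomial.X (e j) : MvPolynomial ι ℚ)) := by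
  have : Function.Injective (MvPolynomial.aeval (R := ℚ)
      fun j => (MvPolynomial.X (e j) : MvPolynomial ι ℚ)) := by
    have h := MvPolynomial.rename_injective (R := ℚ) e he
    rwa [show MvPolynomial.rename (R := ℚ) e = MvPolynomial.aeval fun j => MvPolynomial.X (e j) by
      ext; simp] at h
  exact (IsFractionRing.injective _ _).comp this

lemma linToPoly_single {ι : Type} (i : ι) :
    linToPoly (Finsupp.single i 1) = MvPolynomial.X i := by
  simp [linToPoly]

lemma aeval_X_linToPoly {κ ι : Type} (e : κ → ι) (u : κ →₀ ℤ) :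
    MvPolynomial.aeval (fun j => (MvPolynomial.X (e j) : MvPolynomial ι ℚ)) (linToPoly u) =
      linToPoly (Finsupp.mapDomain e u) := by
  rw [linToPoly, linToPoly, Finsupp.sum_mapDomain_index (by simp) (by simp [add_smul])]
  simp [Finsupp.sum, map_sum]

/-! ### Evaluation of moulds at words -/

/-- Evaluation at a word whose length is known only up to a propositional equality. -/
lemma ratEvalWord_of_length {Γ ι : Type} (M : RatMould Γ) (α : List (Γ × (ι →₀ ℤ))) (n : ℕ)
    (g : Fin n → Γ × (ι →₀ ℤ)) (h : α = List.ofFn g) :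
    ratEvalWord M α = ratEval (fun j => linToPoly (g j).2) (M.comp n fun j => (g j).1) := by
  have hn : α.length = n := by simp [h]
  subst hn
  have : g = α.get := by
    apply List.ofFn_injective
    rw [← h, List.ofFn_get]
  subst this
  rfl

lemma ratEvalWord_map {Γ ι : Type} {r : ℕ} (M : RatMould Γ) (e : Fin r → ι)
    (he : Function.Injective e) (α : List (Γ × (Fin r →₀ ℤ))) :
    ratEval (fun j => MvPolynomial.X (e j)) (ratEvalWord M α) =
      ratEvalWord M (α.map (Prod.map id (Finsupp.mapDomain e))) := by
  rw [ratEvalWord_of_length M (α.map _) α.length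
    (fun j => Prod.map id (Finsupp.mapDomain e) (α.get j))
    (by apply List.ext_get <;> simp)]
  rw [ratEvalWord, ratEval_ratEval _ (substHom_X_injective e he)]
  simp only [aeval_X_linToPoly]
  rfl

/-- If substituting the forms of `α` is injective on polynomials, evaluation at `α` is a field
embedding, hence turns the mould product into the convolution along deconcatenation. -/
lemma ratEvalWord_mul {Γ ι : Type} (A B : RatMould Γ) (α : List (Γ × (ι →₀ ℤ)))
    (h : Function.Injective (substHom fun j : Fin α.length => linToPoly (α.get j).2)) :
    ratEvalWord (A.mul B) α = conv (ratEvalWord A) (ratEvalWord B) α := by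
  rw [ratEvalWord, conv, Finset.sum_range, ratEval_eq _ h, RatMould.mul, map_sum]
  refine Finset.sum_congr rfl fun i _ => ?_
  rw [map_mul, ← ratEval_eq, ← ratEval_eq, ratEval_ratEval _ h, ratEval_ratEval _ h]
  congr 1
  · rw [ratEvalWord_of_length A (α.take i) i (fun j => α.get (Fin.castLE i.is_le j))
      (by apply List.ext_get <;> simp [i.is_le])]
    simp
  · rw [ratEvalWord_of_length B (α.drop i) (α.length - i)
      (fun j => α.get ⟨(i : ℕ) + (j : ℕ), by have := j.isLt; have := i.is_le; omega⟩)
      (by apply List.ext_get <;> simp)]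
    simp

/-- A word whose forms are pairwise distinct variables gives an injective substitution. -/
lemma injective_of_forms {Γ ι : Type} (α : List (Γ × (ι →₀ ℤ)))
    (hn : (α.map Prod.snd).Nodup) (hv : ∀ u ∈ α.map Prod.snd, ∃ i, u = Finsupp.single i 1) :
    Function.Injective (substHom fun j : Fin α.length => linToPoly (α.get j).2) := by
  have : ∀ j : Fin α.length, ∃ i, (α.get j).2 = Finsupp.single i 1 := fun j =>
    hv _ (List.mem_map.2 ⟨_, List.get_mem α j, rfl⟩)
  choose e he using this
  simp only [he, linToPoly_single]
  apply substHom_X_injective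
  intro j k hjk
  have h2 : (α.get j).2 = (α.get k).2 := by rw [he, he, hjk]
  rw [List.nodup_iff_injective_get] at hn
  have := @hn ⟨j, by simp⟩ ⟨k, by simp⟩ (by simpa using h2)
  simpa [Fin.ext_iff] using this

/-! ### Components of `Sh_*` -/

lemma embA_injective (p q : ℕ) (i : Fin (p + 1)) (j : Fin (q + 1)) :
    Function.Injective (embA p q i j) := by
  intro k l h
  have := i.is_le
  ext
  unfold embA at h
  split_ifs at h <;> simp only [Fin.mk.injEq] at h <;> omega

lemma embB_injective (p q : ℕ) (i : Fin (p + 1)) (j : Fin (q + 1)) :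
    Function.Injective (embB p q i j) := by
  intro k l h
  have := i.is_le
  ext
  unfold embB at h
  split_ifs at h <;> simp only [Fin.mk.injEq] at h <;> omega

/-- Renaming the variables in a component of `Sh_*(M)` renames the letters of the two words. -/
lemma ratEval_ShStar {Γ ι : Type} [Group Γ] (M : RatMould Γ) (p q : ℕ) (e : Fin (p + q) → ι)
    (he : Function.Injective e) (σ : Fin (p + q) → Γ) :
    ratEval (fun k => MvPolynomial.X (e k)) ((ShStar M).comp p q σ) =
      shPair (ratEvalWord M)
        (List.ofFn fun i : Fin p => (σ (Fin.castAdd q i),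
          Finsupp.single (e (Fin.castAdd q i)) (1 : ℤ)))
        (List.ofFn fun i : Fin q => (σ (Fin.natAdd p i),
          Finsupp.single (e (Fin.natAdd p i)) (1 : ℤ))) := by
  have hinj := substHom_X_injective e he
  rw [ratEval_eq _ hinj]
  change ratHom _ hinj (shPair (ratEvalWord M) _ _) = _
  rw [map_shPair e (ratHom _ hinj) (fun u => ?_) _ (ratEvalWord M) (fun α => ?_)]
  · simp [List.map_ofFn, Function.comp_def]
  · rw [linK, ratHom_algebraMap, aeval_X_linToPoly, linK]
  · rw [← ratEval_eq, ratEvalWord_map M e he]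

/-- `Sh_*` is a `ℚ`-algebra homomorphism:
`Sh_*(A×B) = Sh_*(A) × Sh_*(B)`. -/
theorem statement5 (Γ : Type) [Group Γ] (A B : RatMould Γ) :
    ShStar (A.mul B) = (ShStar A).mul (ShStar B) := by
  suffices h : (ShStar (A.mul B)).comp = ((ShStar A).mul (ShStar B)).comp from
    congrArg RatDimould.mk h
  funext p q σ
  set w₁ := List.ofFn fun i : Fin p =>
    (σ (Fin.castAdd q i), Finsupp.single (Fin.castAdd q i) (1 : ℤ)) with hw₁
  set w₂ := List.ofFn fun i : Fin q =>
    (σ (Fin.natAdd p i), Finsupp.single (Fin.natAdd p i) (1 : ℤ)) with hw₂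
  have hforms : w₁.map Prod.snd ++ w₂.map Prod.snd =
      List.ofFn fun i : Fin (p + q) => Finsupp.single i (1 : ℤ) := by
    rw [List.ofFn_add, hw₁, hw₂, List.map_ofFn, List.map_ofFn]
    rfl
  have hstep : (ShStar (A.mul B)).comp p q σ =
      shPair (conv (ratEvalWord A) (ratEvalWord B)) w₁ w₂ := by
    refine Finset.sum_congr rfl fun α hα => ?_
    have hsub := forms_subperm w₁ w₂ α hα
    rw [hforms] at hsub
    dsimp only
    rw [ratEvalWord_mul A B α (injective_of_forms α (List.nodup_iff_count_le_one.2 fun u =>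
      (hsub.count_le u).trans (List.nodup_iff_count_le_one.1 (List.nodup_ofFn.2
        (Finsupp.single_left_injective one_ne_zero)) u)) fun u hu => ?_)]
    obtain ⟨i, hi⟩ := (List.mem_ofFn' _ _).1 (hsub.subset hu)
    exact ⟨i, hi.symm⟩
  rw [hstep, shPair_conv, RatDimould.mul]
  have h₁ : w₁.length = p := by simp [hw₁]
  have h₂ : w₂.length = q := by simp [hw₂]
  have hcast : ∀ (n m : ℕ) (_ : n = m) (f : ℕ → RatFunc' (Fin (p + q))),
      ∑ i ∈ Finset.range (n + 1), f i = ∑ i : Fin (m + 1), f i := by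
    rintro n _ rfl f
    exact Finset.sum_range f
  rw [hcast _ _ h₁]
  refine Finset.sum_congr rfl fun i _ => ?_
  rw [hcast _ _ h₂]
  refine Finset.sum_congr rfl fun j _ => ?_
  have hi := i.is_le
  have hj := j.is_le
  rw [ratEval_ShStar A _ _ _ (embA_injective p q i j),
    ratEval_ShStar B _ _ _ (embB_injective p q i j)]
  -- what remains is that `embA` and `embB` list the letters of the initial and final parts
  congr 2
  · apply List.ext_get
    · simp [hw₁, hi]
    · intro n h h'
      simp at h h'
      simp [hw₁, embA]
  · apply List.ext_get
    · simp [hw₂, hj]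
    · intro n h h'
      simp at h h'
      simp [hw₂, embA]
  · apply List.ext_get
    · simp [hw₁]
    · intro n h h'
      simp at h h'
      simp [hw₁, embB]
  · apply List.ext_get
    · simp [hw₂]
    · intro n h h'
      simp at h h'
      simp [hw₂, embB, Fin.natAdd, add_assoc]

end
end

section
/- For all integers p, q ≥ 1, the identity Σ_{τ a (p,q)-shuffle} Π_{k=1}^{p+q} (x_{τ⁻¹(1)} + x_{τ⁻¹(2)} + ⋯ + x_{τ⁻¹(k)})⁻¹ = Π_{k=1}^{p} (x_1 + ⋯ + x_k)⁻¹ · Π_{k=1}^{q} (x_{p+1} + ⋯ + x_{p+k})⁻¹ holds in the field ℚ(x_1,…,x_{p+q}) of rational functions. (Equivalently, Ecalle's mould paj, with paj(∅) = 1 and paj(x_1,…,x_m) = 1/(x_1(x_1+x_2)⋯(x_1+⋯+x_m)), is symmetral.) -/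
/-!
Read a shuffle `τ` through its inverse word `w = τ⁻¹`, a linear extension of the order on
`Fin (p + q)` that is the disjoint union of the two chains `{1,…,p}` and `{p+1,…,p+q}`. For any
relation `r`, the sum over linear extensions of a set `S` of the inverse products of partial sums
satisfies a recursion obtained by removing the last letter (`extSum_succ`): it is
`(∑ i ∈ S, x i)⁻¹` times the sum over the maximal elements `l` of `S` of the same quantity for
`S \ {l}`. For the union of the first `a` letters of one chain and the first `b` of the other,
whose sums are `A` and `B`, the maximal elements are the two final letters, and the product
`P a * Q b` of the chain terms satisfies the same recursion, because
`P (a - 1) * Q b + P a * Q (b - 1) = (A + B) * (P a * Q b)`. Induction on `a + b` concludes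
(`extSum_initPair`).
-/

open scoped Classical

noncomputable section

/-- A `(p,q)`-shuffle: a permutation of `{1,…,p+q}` increasing on the first `p`
and on the last `q` indices. -/
def IsShufflePerm (p q : ℕ) (τ : Equiv.Perm (Fin (p + q))) : Prop :=
  ∀ i j : Fin (p + q), (i : ℕ) < (j : ℕ) → ((j : ℕ) < p ∨ p ≤ (i : ℕ)) → τ i < τ j

/-- The variable `x_i` as an element of the rational function field
`ℚ(x_1,…,x_{p+q})`. -/
def xv {N : ℕ} (i : Fin N) : FractionRing (MvPolynomial (Fin N) ℚ) :=
  algebraMap (MvPolynomial (Fin N) ℚ) (FractionRing (MvPolynomial (Fin N) ℚ))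
    (MvPolynomial.X i)

/-! ### Linear extensions and removal of the last letter -/

section Aux

variable {α : Type*} {K : Type*} [Field K]

/-- `w` lists every element of `S` exactly once, with `u` before `v` whenever `r u v`: it is a
linear extension of the relation `r` on `S`, written as a word. -/
def IsLinExt (r : α → α → Prop) (S : Finset α) {n : ℕ} (w : Fin n → α) : Prop :=
  Function.Injective w ∧ (∀ i, i ∈ S ↔ ∃ k, w k = i) ∧ ∀ i j, r (w i) (w j) → i < j

/-- The value `∏ₖ (x_{w 1} + ⋯ + x_{w k})⁻¹` of the mould `paj` on the word `w`. -/
def pajWord (x : α → K) {n : ℕ} (w : Fin n → α) : K :=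
  ∏ k : Fin n, (∑ l : Fin n, if (l : ℕ) ≤ (k : ℕ) then x (w l) else 0)⁻¹

/-- The sum of `paj` over the linear extensions of `r` on `S`, of length `n`. It vanishes unless
`n` is the cardinality of `S`. -/
def extSum [Fintype α] (r : α → α → Prop) (x : α → K) (n : ℕ) (S : Finset α) : K :=
  ∑ w : Fin n → α, if IsLinExt r S w then pajWord x w else 0

/-- A word ending in `l` is a linear extension of `S` exactly when `l` is maximal in `S` and the
rest is a linear extension of `S \ {l}`. -/
lemma isLinExt_snoc [DecidableEq α] (r : α → α → Prop) (S : Finset α) {n : ℕ} (w : Fin n → α) (l : α) :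
    IsLinExt r S (Fin.snoc w l : Fin (n + 1) → α) ↔
      (l ∈ S ∧ ∀ m ∈ S, ¬ r l m) ∧ IsLinExt r (S.erase l) w := by
  unfold IsLinExt
  constructor
  · rintro ⟨hi, hS, hr⟩
    have hl : l ∈ S := (hS l).2 ⟨Fin.last n, by simp⟩
    have hne : ∀ k, w k ≠ l := by
      intro k hk
      have := @hi k.castSucc (Fin.last n) (by simpa using hk)
      exact absurd this (Fin.castSucc_lt_last k).ne
    refine ⟨⟨hl, ?_⟩, ?_, ?_, ?_⟩
    · intro m hm hrm
      obtain ⟨k, hk⟩ := (hS m).1 hm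
      have := hr (Fin.last n) k (by simpa [hk] using hrm)
      exact absurd this (not_lt.2 (Fin.le_last k))
    · intro i j hij
      have := @hi i.castSucc j.castSucc (by simpa using hij)
      simpa using this
    · intro i
      rw [Finset.mem_erase, hS]
      constructor
      · rintro ⟨h1, k, hk⟩
        induction k using Fin.lastCases with
        | last => exact absurd (by simpa using hk.symm) h1
        | cast k => exact ⟨k, by simpa using hk⟩
      · rintro ⟨k, rfl⟩
        exact ⟨hne k, k.castSucc, by simp⟩
    · intro i j hij
      have := hr i.castSucc j.castSucc (by simpa using hij)
      simpa using this
  · rintro ⟨⟨hl, hmax⟩, hi, hS, hr⟩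
    have hw : ∀ k, w k ≠ l ∧ w k ∈ S := fun k => Finset.mem_erase.1 ((hS _).2 ⟨k, rfl⟩)
    refine ⟨?_, ?_, ?_⟩
    · intro i j hij
      induction i using Fin.lastCases with
      | last =>
        induction j using Fin.lastCases with
        | last => rfl
        | cast j => exact absurd (by simpa using hij.symm) (hw j).1
      | cast i =>
        induction j using Fin.lastCases with
        | last => exact absurd (by simpa using hij) (hw i).1
        | cast j => rw [hi (a₁ := i) (a₂ := j) (by simpa using hij)]
    · intro i
      by_cases h : i = l
      · subst h
        exact ⟨fun _ => ⟨Fin.last n, by simp⟩, fun _ => hl⟩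
      · constructor
        · intro his
          obtain ⟨k, hk⟩ := (hS i).1 (Finset.mem_erase.2 ⟨h, his⟩)
          exact ⟨k.castSucc, by simpa using hk⟩
        · rintro ⟨k, hk⟩
          induction k using Fin.lastCases with
          | last => exact absurd (by simpa using hk.symm) h
          | cast k =>
            rw [← hk]
            simpa using (hw k).2
    · intro i j hij
      induction i using Fin.lastCases with
      | last =>
        induction j using Fin.lastCases with
        | last => exact absurd (by simpa using hij) (hmax l hl)
        | cast j => exact absurd (by simpa using hij) (hmax _ (hw j).2)
      | cast i =>
        induction j using Fin.lastCases with
        | last => exact Fin.castSucc_lt_last i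
        | cast j => simpa using hr i j (by simpa using hij)

lemma pajWord_snoc (x : α → K) {n : ℕ} (w : Fin n → α) (l : α) :
    pajWord x (Fin.snoc w l : Fin (n + 1) → α) =
      (∑ k, x ((Fin.snoc w l : Fin (n + 1) → α) k))⁻¹ * pajWord x w := by
  unfold pajWord
  rw [Fin.prod_univ_castSucc, mul_comm]
  congr 1
  · congr 1
    refine Finset.sum_congr rfl fun k _ => ?_
    rw [if_pos]
    exact Fin.le_last k
  · refine Finset.prod_congr rfl fun k _ => ?_
    rw [Fin.sum_univ_castSucc]
    have : ¬ n ≤ (k : ℕ) := not_le.2 k.2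
    simp [this]

lemma IsLinExt.sum_eq {r : α → α → Prop} {S : Finset α} {n : ℕ} {w : Fin n → α}
    (h : IsLinExt r S w) (x : α → K) : ∑ k, x (w k) = ∑ i ∈ S, x i := by
  refine Finset.sum_bij (fun k _ => w k) (fun k _ => (h.2.1 _).2 ⟨k, rfl⟩)
    (fun i _ j _ hij => h.1 hij) (fun i hi => ?_) (fun _ _ => rfl)
  obtain ⟨k, hk⟩ := (h.2.1 i).1 hi
  exact ⟨k, Finset.mem_univ _, hk⟩

/-- The last letter of a linear extension of `S` is a maximal element of `S`, and the last
factor of `paj` is the inverse of the total sum over `S`. The predicate `c` describes the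
maximal elements; leaving it free allows any description of them to be used. -/
lemma extSum_succ [Fintype α] [DecidableEq α] (r : α → α → Prop) (x : α → K) (n : ℕ) (S : Finset α)
    (c : α → Prop) [DecidablePred c] (hc : ∀ l, (l ∈ S ∧ ∀ m ∈ S, ¬ r l m) ↔ c l) :
    extSum r x (n + 1) S = (∑ i ∈ S, x i)⁻¹ *
      ∑ l : α, if c l then extSum r x n (S.erase l) else 0 := by
  unfold extSum
  rw [← (Fin.snocEquiv fun _ : Fin (n + 1) => α).sum_comp, Fintype.sum_prod_type, Finset.mul_sum]
  refine Finset.sum_congr rfl fun l _ => ?_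
  change ∑ w : Fin n → α, (if IsLinExt r S (Fin.snoc w l : Fin (n + 1) → α) then
    pajWord x (Fin.snoc w l : Fin (n + 1) → α) else 0) = _
  by_cases hl : c l
  · rw [if_pos hl, Finset.mul_sum]
    refine Finset.sum_congr rfl fun w _ => ?_
    by_cases hw : IsLinExt r (S.erase l) w
    · have h := (isLinExt_snoc r S w l).2 ⟨(hc l).2 hl, hw⟩
      rw [if_pos h, if_pos hw, pajWord_snoc, h.sum_eq]
    · rw [if_neg hw, if_neg fun h => hw ((isLinExt_snoc r S w l).1 h).2, mul_zero]
  · rw [if_neg hl, mul_zero]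
    refine Finset.sum_eq_zero fun w _ => ?_
    rw [if_neg fun h => hl ((hc l).1 ((isLinExt_snoc r S w l).1 h).1)]

end Aux

/-! ### Linear extensions of two chains -/

section TwoChains

variable {K : Type*} [Field K]

/-- The strict order on `{1,…,p+q}` for which `{1,…,p}` and `{p+1,…,p+q}` are chains, with no
relation between them. -/
def chainRel (p q : ℕ) (i j : Fin (p + q)) : Prop :=
  (i : ℕ) < (j : ℕ) ∧ ((j : ℕ) < p ∨ p ≤ (i : ℕ))

/-- The first `a` elements of the first chain with the first `b` elements of the second, for
`a ≤ p` and `b ≤ q`. -/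
def initPair (p q a b : ℕ) : Finset (Fin (p + q)) :=
  Finset.univ.filter fun i => (i : ℕ) < a ∨ (p ≤ (i : ℕ) ∧ (i : ℕ) < p + b)

lemma mem_initPair {p q a b : ℕ} {i : Fin (p + q)} :
    i ∈ initPair p q a b ↔ (i : ℕ) < a ∨ (p ≤ (i : ℕ) ∧ (i : ℕ) < p + b) := by
  simp [initPair]

lemma initPair_zero_zero (p q : ℕ) : initPair p q 0 0 = ∅ := by
  ext i
  simp only [mem_initPair, Finset.notMem_empty, iff_false]
  omega

lemma initPair_maximal {p q a b : ℕ} (ha : a ≤ p) (hb : b ≤ q) (l : Fin (p + q)) :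
    (l ∈ initPair p q a b ∧ ∀ m ∈ initPair p q a b, ¬ chainRel p q l m) ↔
      (l : ℕ) + 1 = a ∨ ((l : ℕ) + 1 = p + b ∧ 0 < b) := by
  simp only [mem_initPair, chainRel]
  constructor
  · rintro ⟨h1 | h1, h2⟩
    · left
      by_contra h
      exact h2 ⟨l + 1, by omega⟩ (by simp; omega) (by simp; omega)
    · right
      refine ⟨?_, by omega⟩
      by_contra h
      exact h2 ⟨l + 1, by omega⟩ (by simp; omega) (by simp; omega)
  · rintro (h | h)
    · exact ⟨by omega, fun m hm => by omega⟩
    · exact ⟨by omega, fun m hm => by omega⟩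

lemma sum_initPair (p q a b : ℕ) (ha : a ≤ p) (x : Fin (p + q) → K) :
    ∑ i ∈ initPair p q a b, x i =
      ∑ i ∈ initPair p q a 0, x i + ∑ i ∈ initPair p q 0 b, x i := by
  rw [← Finset.sum_union]
  · congr 1
    ext i
    simp only [Finset.mem_union, mem_initPair]
    omega
  · rw [Finset.disjoint_left]
    intro i
    simp only [mem_initPair]
    omega

/-- Dropping the last factor of `∏ (T (k + 1))⁻¹` amounts to multiplying by `T a`; since `T 0 = 0`,
this covers the empty product, where there is no factor to drop and the left side is `0`. -/
lemma prod_range_pred (T : ℕ → K) (h0 : T 0 = 0) (a : ℕ) (hT : 0 < a → T a ≠ 0) :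
    (if 0 < a then ∏ k ∈ Finset.range (a - 1), (T (k + 1))⁻¹ else 0) =
      T a * ∏ k ∈ Finset.range a, (T (k + 1))⁻¹ := by
  cases a with
  | zero => simp [h0]
  | succ a =>
    have := hT (Nat.succ_pos a)
    rw [Finset.prod_range_succ, if_pos (Nat.succ_pos a), Nat.add_sub_cancel]
    field_simp

/-- The shuffle identity for initial segments of the two chains. The nonvanishing hypothesis
makes all the partial sums invertible. -/
lemma extSum_initPair (p q : ℕ) (x : Fin (p + q) → K)
    (hx : ∀ S : Finset (Fin (p + q)), S.Nonempty → ∑ i ∈ S, x i ≠ 0) (n : ℕ) :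
    ∀ a b : ℕ, a ≤ p → b ≤ q → a + b = n →
      extSum (chainRel p q) x n (initPair p q a b) =
        (∏ k ∈ Finset.range a, (∑ i ∈ initPair p q (k + 1) 0, x i)⁻¹) *
        (∏ k ∈ Finset.range b, (∑ i ∈ initPair p q 0 (k + 1), x i)⁻¹) := by
  induction n with
  | zero =>
    intro a b ha hb hab
    obtain ⟨rfl, rfl⟩ : a = 0 ∧ b = 0 := by omega
    have h : IsLinExt (chainRel p q) (initPair p q 0 0) (default : Fin 0 → Fin (p + q)) := by
      refine ⟨fun i => i.elim0, fun i => ?_, fun i => i.elim0⟩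
      simp only [mem_initPair, IsEmpty.exists_iff, iff_false]
      omega
    rw [extSum, Fintype.sum_unique, if_pos h]
    simp [pajWord]
  | succ n ih =>
    intro a b ha hb hab
    rw [extSum_succ _ _ _ _
      (fun l : Fin (p + q) => (l : ℕ) + 1 = a ∨ ((l : ℕ) + 1 = p + b ∧ 0 < b))
      (initPair_maximal ha hb)]
    -- The contributions of the words ending with the final letter of each chain; a chain whose
    -- current segment is empty contributes nothing.
    have hA : (∑ l : Fin (p + q), if (l : ℕ) + 1 = a then
        extSum (chainRel p q) x n ((initPair p q a b).erase l) else 0) =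
        if 0 < a then extSum (chainRel p q) x n (initPair p q (a - 1) b) else 0 := by
      by_cases h : 0 < a
      · rw [if_pos h, Finset.sum_eq_single_of_mem (⟨a - 1, by omega⟩ : Fin (p + q))
          (Finset.mem_univ _)]
        · rw [if_pos (by simp; omega)]
          congr 1
          ext i
          simp only [Finset.mem_erase, mem_initPair, ne_eq, Fin.ext_iff]
          omega
        · intro l _ hl
          rw [ne_eq, Fin.ext_iff] at hl
          exact if_neg (by simp at hl; omega)
      · rw [if_neg h]
        exact Finset.sum_eq_zero fun l _ => if_neg (by omega)
    have hB : (∑ l : Fin (p + q), if (l : ℕ) + 1 = p + b ∧ 0 < b then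
        extSum (chainRel p q) x n ((initPair p q a b).erase l) else 0) =
        if 0 < b then extSum (chainRel p q) x n (initPair p q a (b - 1)) else 0 := by
      by_cases h : 0 < b
      · rw [if_pos h, Finset.sum_eq_single_of_mem (⟨p + b - 1, by omega⟩ : Fin (p + q))
          (Finset.mem_univ _)]
        · rw [if_pos (by simp; omega)]
          congr 1
          ext i
          simp only [Finset.mem_erase, mem_initPair, ne_eq, Fin.ext_iff]
          omega
        · intro l _ hl
          rw [ne_eq, Fin.ext_iff] at hl
          exact if_neg (by simp at hl; omega)
      · rw [if_neg h]
        exact Finset.sum_eq_zero fun l _ => if_neg (by omega)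
    have hsplit : (∑ l : Fin (p + q), if (l : ℕ) + 1 = a ∨ ((l : ℕ) + 1 = p + b ∧ 0 < b) then
        extSum (chainRel p q) x n ((initPair p q a b).erase l) else 0) =
        (if 0 < a then extSum (chainRel p q) x n (initPair p q (a - 1) b) else 0) +
        if 0 < b then extSum (chainRel p q) x n (initPair p q a (b - 1)) else 0 := by
      rw [← hA, ← hB, ← Finset.sum_add_distrib]
      refine Finset.sum_congr rfl fun l _ => ?_
      by_cases h1 : (l : ℕ) + 1 = a
      · rw [if_pos (Or.inl h1), if_pos h1, if_neg (by omega), add_zero]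
      · by_cases h2 : (l : ℕ) + 1 = p + b ∧ 0 < b
        · rw [if_pos (Or.inr h2), if_neg h1, if_pos h2, zero_add]
        · rw [if_neg (by tauto), if_neg h1, if_neg h2, add_zero]
    have hP := prod_range_pred (fun a => ∑ i ∈ initPair p q a 0, x i)
      (by simp [initPair_zero_zero]) a
      (fun h => hx _ ⟨⟨0, by omega⟩, mem_initPair.2 (Or.inl h)⟩)
    have hQ := prod_range_pred (fun b => ∑ i ∈ initPair p q 0 b, x i)
      (by simp [initPair_zero_zero]) b
      (fun h => hx _ ⟨⟨p, by omega⟩, mem_initPair.2 (Or.inr ⟨le_rfl, by simp; omega⟩)⟩)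
    have hT : ∑ i ∈ initPair p q a b, x i ≠ 0 := by
      apply hx
      rcases Nat.eq_zero_or_pos a with h | h
      · exact ⟨⟨p, by omega⟩, mem_initPair.2 (Or.inr ⟨le_rfl, by simp; omega⟩)⟩
      · exact ⟨⟨0, by omega⟩, mem_initPair.2 (Or.inl h)⟩
    have h1 : (if 0 < a then extSum (chainRel p q) x n (initPair p q (a - 1) b) else 0) =
        (if 0 < a then ∏ k ∈ Finset.range (a - 1), (∑ i ∈ initPair p q (k + 1) 0, x i)⁻¹ else 0) *
        ∏ k ∈ Finset.range b, (∑ i ∈ initPair p q 0 (k + 1), x i)⁻¹ := by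
      by_cases h : 0 < a
      · rw [if_pos h, if_pos h, ih (a - 1) b (by omega) hb (by omega)]
      · rw [if_neg h, if_neg h, zero_mul]
    have h2 : (if 0 < b then extSum (chainRel p q) x n (initPair p q a (b - 1)) else 0) =
        (∏ k ∈ Finset.range a, (∑ i ∈ initPair p q (k + 1) 0, x i)⁻¹) *
        (if 0 < b then ∏ k ∈ Finset.range (b - 1), (∑ i ∈ initPair p q 0 (k + 1), x i)⁻¹
          else 0) := by
      by_cases h : 0 < b
      · rw [if_pos h, if_pos h, ih a (b - 1) ha (by omega) (by omega)]
      · rw [if_neg h, if_neg h, mul_zero]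
    rw [hsplit, h1, h2, hP, hQ, inv_mul_eq_iff_eq_mul₀ hT, sum_initPair p q a b ha x]
    ring

/-! ### Shuffles as linear extensions -/

lemma sum_initPair_left (p q : ℕ) (x : Fin (p + q) → K) (k : Fin p) :
    (∑ l : Fin p, if (l : ℕ) ≤ (k : ℕ) then x (Fin.castAdd q l) else 0) =
      ∑ i ∈ initPair p q (k + 1) 0, x i := by
  rw [initPair, Finset.sum_filter, Fin.sum_univ_add]
  have h : ∀ l : Fin q, ¬ (p + (l : ℕ) < k + 1 ∨ p ≤ p + (l : ℕ) ∧ p + (l : ℕ) < p) :=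
    fun l => by omega
  have h' : ∀ l : Fin p, ((l : ℕ) < k + 1 ∨ p ≤ (l : ℕ) ∧ (l : ℕ) < p) ↔ (l : ℕ) ≤ k :=
    fun l => by omega
  simp only [Fin.val_castAdd, Fin.val_natAdd, add_zero, h, h', if_false, Finset.sum_const_zero]

lemma sum_initPair_right (p q : ℕ) (x : Fin (p + q) → K) (k : Fin q) :
    (∑ l : Fin q, if (l : ℕ) ≤ (k : ℕ) then x (Fin.natAdd p l) else 0) =
      ∑ i ∈ initPair p q 0 (k + 1), x i := by
  rw [initPair, Finset.sum_filter, Fin.sum_univ_add]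
  have h : ∀ l : Fin p, ¬ ((l : ℕ) < 0 ∨ p ≤ (l : ℕ) ∧ (l : ℕ) < p + (k + 1)) :=
    fun l => by omega
  have h' : ∀ l : Fin q, (p + (l : ℕ) < 0 ∨ p ≤ p + (l : ℕ) ∧ p + (l : ℕ) < p + (k + 1)) ↔
      (l : ℕ) ≤ k := fun l => by omega
  simp only [Fin.val_castAdd, Fin.val_natAdd, h, h', if_false, Finset.sum_const_zero, zero_add]

lemma isLinExt_symm_iff (p q : ℕ) (τ : Equiv.Perm (Fin (p + q))) :
    IsLinExt (chainRel p q) (initPair p q p q) (τ.symm : Fin (p + q) → Fin (p + q)) ↔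
      IsShufflePerm p q τ := by
  constructor
  · rintro ⟨-, -, h⟩ i j hij hb
    exact h (τ i) (τ j) (by simpa using ⟨hij, hb⟩)
  · intro h
    refine ⟨τ.symm.injective, fun i => ?_, fun i j hij => ?_⟩
    · simp only [mem_initPair]
      exact ⟨fun _ => ⟨τ i, by simp⟩, fun _ => by omega⟩
    · simpa using h _ _ hij.1 hij.2

/-- Shuffles correspond to linear extensions through their inverses. -/
lemma sum_shuffle_eq_extSum (p q : ℕ) (x : Fin (p + q) → K) :
    (∑ τ : Equiv.Perm (Fin (p + q)),
        if IsShufflePerm p q τ then pajWord x τ.symm else 0) =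
      extSum (chainRel p q) x (p + q) (initPair p q p q) := by
  unfold extSum
  refine Finset.sum_of_injOn (fun τ : Equiv.Perm (Fin (p + q)) => (τ.symm : _ → _)) ?_ ?_ ?_ ?_
  · intro τ _ σ _ h
    exact Equiv.symm_bijective.injective (DFunLike.coe_injective h)
  · intro τ _
    simp
  · intro w _ hw
    refine if_neg fun h => hw ?_
    refine ⟨(Equiv.ofBijective w (Finite.injective_iff_bijective.1 h.1)).symm, by simp, ?_⟩
    rfl
  · intro τ _
    simp only [isLinExt_symm_iff]

end TwoChains

/-! ### The rational function field -/

/-- Specialising all variables to `1` sends the sum over `S` to the cardinality of `S`. -/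
lemma sum_xv_ne_zero {N : ℕ} (S : Finset (Fin N)) (hS : S.Nonempty) : ∑ i ∈ S, xv i ≠ 0 := by
  unfold xv
  rw [← map_sum]
  intro h
  have h0 := (IsFractionRing.injective (MvPolynomial (Fin N) ℚ)
    (FractionRing (MvPolynomial (Fin N) ℚ))) (h.trans (map_zero _).symm)
  have h1 := congrArg (MvPolynomial.eval fun _ => (1 : ℚ)) h0
  simp [hS.ne_empty] at h1

/-- Symmetrality of Ecalle's mould `paj`: for all `p, q ≥ 1`,
`Σ_{τ a (p,q)-shuffle} Π_{k=1}^{p+q} (x_{τ⁻¹(1)}+⋯+x_{τ⁻¹(k)})⁻¹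
  = Π_{k=1}^{p} (x_1+⋯+x_k)⁻¹ · Π_{k=1}^{q} (x_{p+1}+⋯+x_{p+k})⁻¹`
in `ℚ(x_1,…,x_{p+q})`. -/
theorem statement11 (p q : ℕ) (hp : 1 ≤ p) (hq : 1 ≤ q) :
    (∑ τ : Equiv.Perm (Fin (p + q)),
        if IsShufflePerm p q τ then
          ∏ k : Fin (p + q),
            (∑ l : Fin (p + q), if (l : ℕ) ≤ (k : ℕ) then xv (τ.symm l) else 0)⁻¹
        else 0) =
      (∏ k : Fin p,
          (∑ l : Fin p, if (l : ℕ) ≤ (k : ℕ) then xv (Fin.castAdd q l) else 0)⁻¹) *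
      (∏ k : Fin q,
          (∑ l : Fin q, if (l : ℕ) ≤ (k : ℕ) then xv (Fin.natAdd p l) else 0)⁻¹) := by
  have h := (sum_shuffle_eq_extSum p q xv).trans
    (extSum_initPair p q xv sum_xv_ne_zero (p + q) p q le_rfl le_rfl rfl)
  simp only [pajWord] at h
  rw [h, ← Fin.prod_univ_eq_prod_range
      (fun k => (∑ i ∈ initPair p q (k + 1) 0, (xv i : FractionRing (MvPolynomial _ ℚ)))⁻¹) p,
    ← Fin.prod_univ_eq_prod_range
      (fun k => (∑ i ∈ initPair p q 0 (k + 1), (xv i : FractionRing (MvPolynomial _ ℚ)))⁻¹) q]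
  simp only [sum_initPair_left p q xv, sum_initPair_right p q xv]

end
end

section
/- For all integers p, q ≥ 1, write (x_1·x_2⋯x_p) ш_* (x_{p+1}·x_{p+2}⋯x_{p+q}) = Σ_α c_α·α, a finite sum with c_α ∈ ℚ(x_1,…,x_{p+q}) and α words of nonzero ℤ-linear forms in x_1,…,x_{p+q}. Then Σ_α c_α · Π_{w a letter of α} w⁻¹ = Π_{i=1}^{p+q} x_i⁻¹ in ℚ(x_1,…,x_{p+q}). (Equivalently, Ecalle's mould pic = swap(paj), with pic(∅) = 1 and pic(x_1,…,x_m) = 1/(x_1 x_2 ⋯ x_m), is symmetril.) -/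
/-!
Extend the weight `u₁ ⋯ u_m ↦ u₁⁻¹ ⋯ u_m⁻¹` linearly to combinations of words. Prefixing a letter
`u` multiplies the weight by `u⁻¹`, so by induction on the recursion for `ш_*` the weight of
`(a·ω) ш_* (b·η)` is the weight of `ω` times the weight of `η` times
`a⁻¹ b⁻¹ + b⁻¹ a⁻¹ + (a - b)⁻¹ (a⁻¹ - b⁻¹) = a⁻¹ b⁻¹`.
Hence the weight is multiplicative for `ш_*` (`weight_cshW`) as long as all letters are nonzero and
no letter of the first word equals a letter of the second, which holds for distinct variables.
-/

open scoped Classical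

noncomputable section

/-- The mould `pic` on words (the product of the inverses of the letters), extended linearly to
combinations of words. The labels in `Γ` are ignored. -/
def weight {ι Γ : Type} : (List (Γ × (ι →₀ ℤ)) →₀ RatFunc' ι) →ₗ[RatFunc' ι] RatFunc' ι :=
  Finsupp.linearCombination (RatFunc' ι) fun α => (α.map fun l => (linK l.2)⁻¹).prod

lemma weight_single {ι Γ : Type} (α : List (Γ × (ι →₀ ℤ))) :
    weight (Finsupp.single α 1) = (α.map fun l => (linK l.2)⁻¹).prod := by
  simp [weight]

lemma weight_mapDomain_cons {ι Γ : Type} (a : Γ × (ι →₀ ℤ))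
    (f : List (Γ × (ι →₀ ℤ)) →₀ RatFunc' ι) :
    weight (Finsupp.mapDomain (a :: ·) f) = (linK a.2)⁻¹ * weight f := by
  rw [weight, Finsupp.linearCombination_mapDomain, Finsupp.linearCombination_apply,
    Finsupp.linearCombination_apply, Finsupp.mul_sum]
  refine Finsupp.sum_congr fun α _ => ?_
  simp only [Function.comp_apply, List.map_cons, List.prod_cons, smul_eq_mul]
  ring

lemma linK_sub {ι : Type} (u v : ι →₀ ℤ) : linK (u - v) = linK u - linK v := by
  unfold linK linToPoly
  rw [Finsupp.sum_sub_index, map_sub]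
  intro i c d
  push_cast
  rw [sub_smul]

lemma linK_single {ι : Type} (i : ι) :
    linK (Finsupp.single i (1 : ℤ)) =
      algebraMap (MvPolynomial ι ℚ) (RatFunc' ι) (MvPolynomial.X i) := by
  simp [linK, linToPoly]

lemma linK_single_ne_zero {ι : Type} (i : ι) : linK (Finsupp.single i (1 : ℤ)) ≠ 0 := by
  rw [linK_single]
  exact (map_ne_zero_iff _ (IsFractionRing.injective (MvPolynomial ι ℚ) (RatFunc' ι))).2
    (MvPolynomial.X_ne_zero i)

lemma linK_single_injective {ι : Type} :
    Function.Injective fun i : ι => linK (Finsupp.single i (1 : ℤ)) := by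
  intro i j h
  simp only [linK_single] at h
  exact MvPolynomial.X_injective
    (IsFractionRing.injective (MvPolynomial ι ℚ) (RatFunc' ι) h)

/-- The weight is multiplicative for the contracting shuffle product. The letters of `ω` must differ
from those of `η` because for `a = b` the contraction term of `cshW` vanishes instead of
contributing `-a⁻¹ b⁻¹`. -/
lemma weight_cshW {ι Γ : Type} [Mul Γ] : ∀ (ω η : List (Γ × (ι →₀ ℤ))),
    (∀ a ∈ ω, linK a.2 ≠ 0) → (∀ b ∈ η, linK b.2 ≠ 0) →
    (∀ a ∈ ω, ∀ b ∈ η, linK a.2 ≠ linK b.2) →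
    weight (cshW ω η) =
      (ω.map fun l => (linK l.2)⁻¹).prod * (η.map fun l => (linK l.2)⁻¹).prod
  | [], η, _, _, _ => by rw [cshW, weight_single]; simp
  | a :: ω, [], _, _, _ => by
    rw [cshW, weight_single]
    · simp
    · simp
  | a :: ω, b :: η, h0, h1, h2 => by
    have e1 := weight_cshW ω (b :: η) (fun x hx => h0 x (by simp [hx])) h1
      (fun x hx => h2 x (by simp [hx]))
    have e2 := weight_cshW (a :: ω) η h0 (fun x hx => h1 x (by simp [hx]))
      (fun x hx y hy => h2 x hx y (by simp [hy]))
    have e3 := weight_cshW ω η (fun x hx => h0 x (by simp [hx])) (fun x hx => h1 x (by simp [hx]))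
      (fun x hx y hy => h2 x (by simp [hx]) y (by simp [hy]))
    have ha : linK a.2 ≠ 0 := h0 a (by simp)
    have hb : linK b.2 ≠ 0 := h1 b (by simp)
    have hab : linK a.2 - linK b.2 ≠ 0 := sub_ne_zero.2 (h2 a (by simp) b (by simp))
    rw [cshW]
    simp only [map_add, map_smul, map_sub, weight_mapDomain_cons, e1, e2, e3, linK_sub,
      List.map_cons, List.prod_cons, smul_eq_mul]
    field_simp
    ring
  termination_by ω η => ω.length + η.length

/-- Symmetrility of Ecalle's mould `pic = swap(paj)`:
writing `(x_1⋯x_p) ш_* (x_{p+1}⋯x_{p+q}) = Σ_α c_α α`, one has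
`Σ_α c_α Π_{w letter of α} w⁻¹ = Π_{i=1}^{p+q} x_i⁻¹` in `ℚ(x_1,…,x_{p+q})`. -/
theorem statement12 (p q : ℕ) (hp : 1 ≤ p) (hq : 1 ≤ q) :
    ((cshW
        (List.ofFn fun i : Fin p =>
          (((), Finsupp.single (Fin.castAdd q i) (1 : ℤ)) : Unit × (Fin (p + q) →₀ ℤ)))
        (List.ofFn fun i : Fin q =>
          (((), Finsupp.single (Fin.natAdd p i) (1 : ℤ)) : Unit × (Fin (p + q) →₀ ℤ)))).sum
      fun α c => c * (α.map fun l => (linK l.2)⁻¹).prod) =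
      ∏ i : Fin (p + q), (linK (Finsupp.single i (1 : ℤ)))⁻¹ := by
  change weight _ = _
  rw [weight_cshW]
  · simp [List.map_ofFn, List.prod_ofFn, Fin.prod_univ_add, mul_comm]
  · intro a ha
    obtain ⟨i, rfl⟩ := List.mem_ofFn.1 ha
    exact linK_single_ne_zero _
  · intro b hb
    obtain ⟨j, rfl⟩ := List.mem_ofFn.1 hb
    exact linK_single_ne_zero _
  · intro a ha b hb h
    obtain ⟨i, rfl⟩ := List.mem_ofFn.1 ha
    obtain ⟨j, rfl⟩ := List.mem_ofFn.1 hb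
    have := congrArg Fin.val (linK_single_injective h)
    simp only [Fin.val_castAdd, Fin.val_natAdd] at this
    omega

end
end
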